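/- Let R be a Noetherian domain and A an 𝔸^{m+1}-fibration over R. Then an m-tuple W = (W₁,…,W_m) of elements of A is an m-tuple residual variable of A over R if and only if A is an 𝔸¹-fibration over R[W]. -/

import Mathlib

open TensorProduct

noncomputable section

/-- The residue field `κ(P) = R_P / P R_P` of a commutative ring `R` at a prime ideal `P`. -/
abbrev ResidueFieldAt (R : Type*) [CommRing R] (P : Ideal R) [P.IsPrime] : Type _ :=
  IsLocalRing.ResidueField (Localization.AtPrime P)

/-- `A ⊗_R κ(P)` is a polynomial ring in `n` variables over `B ⊗_R κ(P)`
for every prime ideal `P` of `R`. -/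
def FibersPolynomialOver (R B A : Type*) [CommRing R] [CommRing B] [CommRing A]
    [Algebra R B] [Algebra R A] [Algebra B A] [IsScalarTower R B A] (n : ℕ) : Prop :=
  ∀ (P : Ideal R) (_ : P.IsPrime),
    letI : Algebra (ResidueFieldAt R P ⊗[R] B) (ResidueFieldAt R P ⊗[R] A) :=
      (Algebra.TensorProduct.map (AlgHom.id R (ResidueFieldAt R P))
        (IsScalarTower.toAlgHom R B A)).toRingHom.toAlgebra
    Nonempty ((ResidueFieldAt R P ⊗[R] A) ≃ₐ[ResidueFieldAt R P ⊗[R] B]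
      MvPolynomial (Fin n) (ResidueFieldAt R P ⊗[R] B))

/-- `A` is an `𝔸ⁿ`-fibration over `R`: a finitely generated flat `R`-algebra all of whose
fibres are polynomial rings in `n` variables. -/
def IsAffineFibration (R A : Type*) [CommRing R] [CommRing A] [Algebra R A] (n : ℕ) : Prop :=
  Algebra.FiniteType R A ∧ Module.Flat R A ∧
  ∀ (P : Ideal R) (_ : P.IsPrime),
    Nonempty ((ResidueFieldAt R P ⊗[R] A) ≃ₐ[ResidueFieldAt R P]
      MvPolynomial (Fin n) (ResidueFieldAt R P))

/-- `W` is an `m`-tuple residual variable of the `𝔸ⁿ`-fibration `A` over `R`. -/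
def IsResidualVariable (R A : Type*) [CommRing R] [CommRing A] [Algebra R A]
    (n m : ℕ) (W : Fin m → A) : Prop :=
  AlgebraicIndependent R W ∧
  FibersPolynomialOver R (Algebra.adjoin R (Set.range W)) A (n - m)

/-- A module `M` over `A` is stably free if `M ⊕ Aˢ ≅ Aᵗ` for some `s, t`. -/
def IsStablyFree (A M : Type*) [CommRing A] [AddCommGroup M] [Module A M] : Prop :=
  ∃ s t : ℕ, Nonempty ((M × (Fin s → A)) ≃ₗ[A] (Fin t → A))

end


namespace ResVar

section FlatCrit
universe u v w
variable {R : Type v} {B : Type u} {M : Type w} [CommRing R] [CommRing B] [Algebra R B]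
  [AddCommGroup M] [Module R M] [Module B M] [IsScalarTower R B M]

lemma lift_inj {F N : Type*} [AddCommGroup F] [Module B F] [AddCommGroup N] [Module B N]
    (g : F →ₗ[B] N) (hg : Function.Surjective g) (K : Submodule B N)
    (h : Function.Injective ((K.comap g).subtype.lTensor M)) :
    Function.Injective (K.subtype.lTensor M) := by
  rw [injective_iff_map_eq_zero]
  intro x hx
  let g' : K.comap g →ₗ[B] K := g.restrict (fun _ h => h)
  have hg' : Function.Surjective g' := by
    rintro ⟨y, hy⟩
    obtain ⟨z, rfl⟩ := hg y
    exact ⟨⟨z, hy⟩, rfl⟩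
  obtain ⟨y, rfl⟩ := LinearMap.lTensor_surjective M hg' x
  have h1 : g.lTensor M ((K.comap g).subtype.lTensor M y) = 0 := by
    rw [← hx, ← LinearMap.comp_apply, ← LinearMap.comp_apply, ← LinearMap.lTensor_comp,
      ← LinearMap.lTensor_comp]
    rfl
  have hex := lTensor_exact M (f := (LinearMap.ker g).subtype) (g := g)
    (by rw [LinearMap.exact_iff]; simp) hg
  obtain ⟨z, hz⟩ := (hex _).1 h1
  let i : LinearMap.ker g →ₗ[B] K.comap g := Submodule.inclusion (by
    intro a ha; simp only [Submodule.mem_comap]; rw [LinearMap.mem_ker.1 ha]; exact K.zero_mem)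
  have h2 : i.lTensor M z = y := by
    apply h
    rw [← hz, ← LinearMap.comp_apply, ← LinearMap.lTensor_comp]
    rfl
  rw [← h2, ← LinearMap.comp_apply, ← LinearMap.lTensor_comp]
  have : g' ∘ₗ i = 0 := by
    ext a
    exact a.2
  rw [this]; simp

lemma quot_inj {F : Type*} [AddCommGroup F] [Module B F] (L G : Submodule B F) (hLG : L ≤ G)
    (h : Function.Injective (L.subtype.lTensor M))
    (h' : Function.Injective ((G.map L.mkQ).subtype.lTensor M)) :
    Function.Injective (G.subtype.lTensor M) := by
  rw [injective_iff_map_eq_zero]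
  intro y hy
  let q : G →ₗ[B] G.map L.mkQ := L.mkQ.restrict (fun x hx => Submodule.mem_map_of_mem hx)
  have hq : Function.Surjective q := by
    rintro ⟨_, x, hx, rfl⟩
    exact ⟨⟨x, hx⟩, rfl⟩
  have h1 : q.lTensor M y = 0 := by
    apply h'
    rw [map_zero, ← LinearMap.comp_apply, ← LinearMap.lTensor_comp]
    have : (G.map L.mkQ).subtype ∘ₗ q = L.mkQ ∘ₗ G.subtype := rfl
    rw [this, LinearMap.lTensor_comp, LinearMap.comp_apply, hy, map_zero]
  have hex := lTensor_exact M (f := Submodule.inclusion hLG) (g := q)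
    (by
      intro a
      have : q a = 0 ↔ (a : F) ∈ L := by
        rw [← Submodule.Quotient.mk_eq_zero L, Subtype.ext_iff]; rfl
      rw [this]
      constructor
      · intro ha; exact ⟨⟨a, ha⟩, rfl⟩
      · rintro ⟨b, rfl⟩; exact b.2) hq
  obtain ⟨z, rfl⟩ := (hex _).1 h1
  have : z = 0 := by
    apply h
    rw [map_zero, ← hy, ← LinearMap.comp_apply, ← LinearMap.lTensor_comp]
    rfl
  rw [this, map_zero]

/-- multiplication `F ⊗ J → F`. -/
noncomputable def mulJ (B : Type u) [CommRing B] [Algebra R B] (F : Type*) [AddCommGroup F]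
    [Module B F] [Module R F] [IsScalarTower R B F] (J : Ideal R) : F ⊗[R] J →ₗ[B] F :=
  (AlgebraTensorModule.rid R B F).toLinearMap ∘ₗ
    AlgebraTensorModule.map (LinearMap.id (R := B)) (J.subtype : J →ₗ[R] R)

lemma mulJ_tmul (F : Type*) [AddCommGroup F]
    [Module B F] [Module R F] [IsScalarTower R B F] (J : Ideal R) (f : F) (j : J) :
    mulJ B F J (f ⊗ₜ j) = (j : R) • f := by
  simp [mulJ]

lemma range_mulJ_le (F : Type*) [AddCommGroup F]
    [Module B F] [Module R F] [IsScalarTower R B F] (J : Ideal R) (G : Submodule B F)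
    (h : ∀ j ∈ J, ∀ f : F, j • f ∈ G) : LinearMap.range (mulJ B F J) ≤ G := by
  rintro _ ⟨x, rfl⟩
  induction x with
  | zero => simp
  | add x y hx hy => rw [map_add]; exact G.add_mem hx hy
  | tmul f j => rw [mulJ_tmul]; exact h _ j.2 _

lemma mem_range_mulJ (F : Type*) [AddCommGroup F]
    [Module B F] [Module R F] [IsScalarTower R B F] (J : Ideal R) (j : R) (hj : j ∈ J) (f : F) :
    j • f ∈ LinearMap.range (mulJ B F J) := ⟨f ⊗ₜ ⟨j, hj⟩, mulJ_tmul F J f ⟨j, hj⟩⟩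

lemma mulJ_lTensor_inj (F : Type*) [AddCommGroup F]
    [Module B F] [Module R F] [IsScalarTower R B F] [Module.Flat R (M ⊗[B] F)] (J : Ideal R) :
    Function.Injective ((mulJ B F J).lTensor M) := by
  have h1 : Function.Injective (mulJ B (M ⊗[B] F) J) := by
    have := Module.Flat.lTensor_preserves_injective_linearMap (M := M ⊗[B] F) J.subtype
      J.injective_subtype
    exact (AlgebraTensorModule.rid R B (M ⊗[B] F)).injective.comp this
  have h2 : (mulJ B F J).lTensor M ∘ₗ
      (AlgebraTensorModule.assoc R B B M F J).toLinearMap = mulJ B (M ⊗[B] F) J := by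
    ext m f j
    simp [mulJ_tmul]
  have h3 : ((mulJ B F J).lTensor M : _ → _) = mulJ B (M ⊗[B] F) J ∘
      (AlgebraTensorModule.assoc R B B M F J).symm := by
    rw [← h2]; ext x; simp
  rw [h3]
  exact h1.comp (LinearEquiv.injective _)

lemma range_lTensor_inj {K F : Type*} [AddCommGroup F] [Module B F] [AddCommGroup K] [Module B K]
    (T : K →ₗ[B] F) (hT : Function.Injective (T.lTensor M)) :
    Function.Injective ((LinearMap.range T).subtype.lTensor M) := by
  rw [injective_iff_map_eq_zero]
  intro x hx
  obtain ⟨y, rfl⟩ := LinearMap.lTensor_surjective M T.surjective_rangeRestrict x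
  have : y = 0 := by
    apply hT
    rw [map_zero, ← hx, ← LinearMap.comp_apply, ← LinearMap.lTensor_comp]
    rfl
  rw [this, map_zero]

variable (R B M) in
/-- flatness for modules killed by `J`. -/
def PJ (J : Ideal R) : Prop :=
  ∀ (N : Type u) [AddCommGroup N] [Module B N] [Module R N] [IsScalarTower R B N],
    (∀ j ∈ J, ∀ n : N, j • n = 0) → ∀ K : Submodule B N,
      Function.Injective (K.subtype.lTensor M)

lemma flat_finsupp_tensor [Module.Flat R M] (ι : Type*) : Module.Flat R (M ⊗[B] (ι →₀ B)) := by
  classical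
  have e : (M ⊗[B] (ι →₀ B)) ≃ₗ[B] (ι →₀ M) := TensorProduct.finsuppScalarRight B B M ι
  have : Module.Flat R (ι →₀ M) := Module.Flat.of_linearEquiv (finsuppLEquivDirectSum R M ι)
  exact Module.Flat.of_linearEquiv (e.restrictScalars R)

lemma flat_finsupp [Module.Flat R B] (ι : Type*) : Module.Flat R (ι →₀ B) := by
  classical
  exact Module.Flat.of_linearEquiv (finsuppLEquivDirectSum R B ι)

lemma lemK_aux {J : Ideal R} (hJ : PJ R B M J)
    (N F : Type u) [AddCommGroup N] [Module B N] [Module R N] [IsScalarTower R B N]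
    [AddCommGroup F] [Module B F] [Module R F] [IsScalarTower R B F]
    (hflat : Module.Flat R (M ⊗[B] F)) (g : F →ₗ[B] N) (hg : Function.Surjective g)
    (K : Submodule B N) (hK : ∀ j ∈ J, ∀ n : N, j • n ∈ K) :
    Function.Injective (K.subtype.lTensor M) := by
  refine lift_inj g hg K ?_
  have hr : Function.Injective ((LinearMap.range (mulJ B F J)).subtype.lTensor M) :=
    range_lTensor_inj _ (mulJ_lTensor_inj _ _)
  have h1 : LinearMap.range (mulJ B F J) ≤ K.comap g := by
    apply range_mulJ_le
    intro j hj f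
    rw [Submodule.mem_comap, LinearMap.map_smul_of_tower]
    exact hK j hj _
  have h2 : ∀ j ∈ J, ∀ n : F ⧸ LinearMap.range (mulJ B F J), j • n = 0 := by
    intro j hj n
    obtain ⟨f, rfl⟩ := Submodule.Quotient.mk_surjective _ n
    rw [← Submodule.Quotient.mk_smul, Submodule.Quotient.mk_eq_zero]
    exact mem_range_mulJ _ _ _ hj _
  exact quot_inj (LinearMap.range (mulJ B F J)) (K.comap g) h1 hr (hJ _ h2 _)

lemma lemK [Module.Flat R M] {J : Ideal R} (hJ : PJ R B M J)
    (N : Type u) [AddCommGroup N] [Module B N] [Module R N] [IsScalarTower R B N]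
    (K : Submodule B N) (hK : ∀ j ∈ J, ∀ n : N, j • n ∈ K) :
    Function.Injective (K.subtype.lTensor M) :=
  lemK_aux hJ N (N →₀ B) (flat_finsupp_tensor N) (Finsupp.linearCombination B id)
    (fun n => ⟨Finsupp.single n 1,
      (Finsupp.linearCombination_single B 1 n).trans (one_smul B n)⟩) K hK

lemma torsionfree (F : Type*) [AddCommGroup F] [Module B F] [Module R F] [IsScalarTower R B F]
    [Module.Flat R F] (J : Ideal R) [J.IsPrime] (c : R) (hc : c ∉ J) (f : F)
    (hf : c • f ∈ LinearMap.range (mulJ B F J)) : f ∈ LinearMap.range (mulJ B F J) := by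
  have key : ∀ f : F, f ∈ LinearMap.range (mulJ B F J) ↔ f ⊗ₜ[R] (1 : R ⧸ J) = 0 := by
    intro f
    have hex := lTensor_exact F (f := J.subtype) (g := (Submodule.mkQ J : R →ₗ[R] R ⧸ J))
      (by rw [LinearMap.exact_iff]; simp) (Submodule.mkQ_surjective _)
    have h := hex (f ⊗ₜ (1 : R))
    have e : (f ⊗ₜ[R] (1 : R ⧸ J)) = (Submodule.mkQ J : R →ₗ[R] R ⧸ J).lTensor F (f ⊗ₜ (1 : R)) := rfl
    rw [e, h]
    have e2 : ∀ x, mulJ B F J x = TensorProduct.rid R F (J.subtype.lTensor F x) := fun x => rfl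
    constructor
    · rintro ⟨x, hx⟩
      refine ⟨x, ?_⟩
      apply (TensorProduct.rid R F).injective
      rw [← e2, hx]; simp
    · rintro ⟨x, hx⟩
      exact ⟨x, by rw [e2, hx]; simp⟩
  rw [key] at hf ⊢
  have hinj : Function.Injective (LinearMap.lsmul R (R ⧸ J) c) := by
    rw [injective_iff_map_eq_zero]
    intro a ha
    obtain ⟨a, rfl⟩ := Ideal.Quotient.mk_surjective a
    have : Ideal.Quotient.mk J (c * a) = 0 := by rw [map_mul]; exact ha
    rw [Ideal.Quotient.eq_zero_iff_mem] at this ⊢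
    exact (Ideal.IsPrime.mem_or_mem ‹_› this).resolve_left hc
  have := Module.Flat.lTensor_preserves_injective_linearMap (M := F) _ hinj
  apply this
  rw [map_zero, ← hf, LinearMap.lTensor_tmul, LinearMap.lsmul_apply, TensorProduct.tmul_smul,
    TensorProduct.smul_tmul']

theorem flat_crit [IsNoetherianRing R] [Module.Flat R B] [Module.Flat R M]
    (hgen : ∀ (P : Ideal R) [P.IsPrime] (N : Type u) [AddCommGroup N] [Module B N] [Module R N]
      [IsScalarTower R B N], (∀ j ∈ P, ∀ n : N, j • n = 0) → ∀ (K : Submodule B N) (x : M ⊗[B] K),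
        K.subtype.lTensor M x = 0 → ∃ c ∉ P, c • x = 0) : Module.Flat B M := by
  have main : ∀ J : Ideal R, PJ R B M J := by
    refine IsNoetherian.induction (R := R) (M := R) (P := fun J : Ideal R => PJ R B M J)
      (fun (J : Ideal R) ih => ?_)
    by_cases htop : J = ⊤
    · intro N _ _ _ _ hN K
      have : Subsingleton N := ⟨fun a b => by
        rw [← one_smul R a, ← one_smul R b, hN 1 (by simp [htop]), hN 1 (by simp [htop])]⟩
      have : Subsingleton (M ⊗[B] K) := inferInstance
      exact Function.injective_of_subsingleton _
    by_cases hp : J.IsPrime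
    · intro N _ _ _ _ hN K
      let F0 := N →₀ B
      have : Module.Flat R F0 := flat_finsupp N
      let L := LinearMap.range (mulJ B F0 J)
      let g0 : F0 →ₗ[B] N := Finsupp.linearCombination B id
      have hg0 : Function.Surjective g0 := fun n => ⟨Finsupp.single n 1, by
        exact (Finsupp.linearCombination_single B 1 n).trans (one_smul B n)⟩
      have hL : L ≤ LinearMap.ker g0 := by
        apply range_mulJ_le
        intro j hj f
        rw [LinearMap.mem_ker, LinearMap.map_smul_of_tower, hN j hj]
      let g : (F0 ⧸ L) →ₗ[B] N := L.liftQ g0 hL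
      have hg : Function.Surjective g := by
        intro n
        obtain ⟨x, hx⟩ := hg0 n
        exact ⟨L.mkQ x, hx⟩
      refine lift_inj g hg K ?_
      generalize K.comap g = G
      have hF : ∀ j ∈ J, ∀ n : F0 ⧸ L, j • n = 0 := by
        intro j hj n
        obtain ⟨f, rfl⟩ := Submodule.Quotient.mk_surjective _ n
        rw [← Submodule.Quotient.mk_smul, Submodule.Quotient.mk_eq_zero]
        exact mem_range_mulJ _ _ _ hj _
      have htf : ∀ c ∉ J, ∀ n : F0 ⧸ L, c • n = 0 → n = 0 := by
        intro c hc n hn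
        obtain ⟨f, rfl⟩ := Submodule.Quotient.mk_surjective _ n
        rw [← Submodule.Quotient.mk_smul, Submodule.Quotient.mk_eq_zero] at hn
        rw [Submodule.Quotient.mk_eq_zero]
        exact torsionfree F0 J c hc f hn
      rw [injective_iff_map_eq_zero]
      intro x hx
      obtain ⟨c, hc, hcx⟩ := hgen J (F0 ⧸ L) hF G x hx
      have hlt : J < J ⊔ Ideal.span {c} := by
        refine lt_of_le_of_ne le_sup_left fun h => hc ?_
        rw [h]
        exact Ideal.mem_sup_right (Ideal.mem_span_singleton_self c)
      let μ : G →ₗ[B] G := algebraMap R B c • LinearMap.id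
      have hμ : ∀ y, μ y = c • y := fun y => by simp [μ]
      have hμi : Function.Injective μ := by
        rw [injective_iff_map_eq_zero]
        intro y hy
        rw [hμ] at hy
        exact Subtype.ext (htf c hc _ (congrArg Subtype.val hy))
      have hKi := lemK (ih _ hlt) G (LinearMap.range μ) (by
        intro j hj n
        obtain ⟨a, ha, b, hb, rfl⟩ := Submodule.mem_sup.1 hj
        obtain ⟨b, rfl⟩ := Ideal.mem_span_singleton'.1 hb
        refine ⟨b • n, ?_⟩
        rw [hμ, add_smul, mul_comm, mul_smul]
        have : a • n = 0 := Subtype.ext (hF a ha n)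
        rw [this, zero_add])
      let e := LinearEquiv.ofInjective μ hμi
      apply (LinearEquiv.lTensor M e).injective
      apply hKi
      rw [map_zero, map_zero]
      have : (LinearMap.range μ).subtype.lTensor M (LinearEquiv.lTensor M e x) = μ.lTensor M x := by
        change (LinearMap.range μ).subtype.lTensor M (e.toLinearMap.lTensor M x) = _
        rw [← LinearMap.comp_apply, ← LinearMap.lTensor_comp]
        rfl
      rw [this, ← hcx]
      have h5 : μ.lTensor M = algebraMap R B c • LinearMap.id := by
        change ((algebraMap R B c) • (LinearMap.id : G →ₗ[B] G)).lTensor M = _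
        rw [LinearMap.lTensor_smul, LinearMap.lTensor_id]
      rw [h5, LinearMap.smul_apply, LinearMap.id_apply, algebraMap_smul]
    · rw [Ideal.isPrime_iff] at hp
      push Not at hp
      obtain ⟨x, y, hxy, hx, hy⟩ := hp htop
      have hlt : ∀ c ∉ J, J < J ⊔ Ideal.span {c} := by
        intro c hc
        refine lt_of_le_of_ne le_sup_left fun h => hc ?_
        rw [h]
        exact Ideal.mem_sup_right (Ideal.mem_span_singleton_self c)
      intro N _ _ _ _ hN K
      let μ : N →ₗ[B] N := algebraMap R B x • LinearMap.id
      have hμ : ∀ y, μ y = x • y := fun y => by simp [μ]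
      let G := K ⊔ LinearMap.range μ
      have h1 : Function.Injective (G.subtype.lTensor M) := by
        refine lemK (ih _ (hlt x hx)) N G ?_
        intro j hj n
        obtain ⟨a, ha, b, hb, rfl⟩ := Submodule.mem_sup.1 hj
        obtain ⟨b, rfl⟩ := Ideal.mem_span_singleton'.1 hb
        rw [add_smul, hN a ha, zero_add, mul_comm, mul_smul, ← hμ]
        exact Submodule.mem_sup_right ⟨_, rfl⟩
      have h2 : Function.Injective ((K.comap G.subtype).subtype.lTensor M) := by
        refine lemK (ih _ (hlt y hy)) G _ ?_
        intro j hj n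
        obtain ⟨a, ha, b, hb, rfl⟩ := Submodule.mem_sup.1 hj
        obtain ⟨b, rfl⟩ := Ideal.mem_span_singleton'.1 hb
        obtain ⟨n, hn⟩ := n
        obtain ⟨k, hk, l, ⟨l, rfl⟩, rfl⟩ := Submodule.mem_sup.1 hn
        have : (a + b * y) • (k + μ l) = (a + b * y) • k := by
          have h3 : y • μ l = 0 := by
            rw [hμ, smul_smul, mul_comm, hN _ hxy]
          rw [smul_add, add_smul _ _ (μ l), mul_smul b y (μ l), h3, smul_zero, hN a ha, zero_add, add_zero]
        rw [Submodule.mem_comap]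
        change (a + b * y) • (k + μ l) ∈ K
        rw [this]
        exact Submodule.smul_of_tower_mem K _ hk
      let i : K →ₗ[B] K.comap G.subtype :=
        { toFun := fun k => ⟨⟨k, Submodule.mem_sup_left k.2⟩, k.2⟩
          map_add' := fun _ _ => rfl
          map_smul' := fun _ _ => rfl }
      let i' : K.comap G.subtype →ₗ[B] K :=
        { toFun := fun k => ⟨k.1.1, k.2⟩
          map_add' := fun _ _ => rfl
          map_smul' := fun _ _ => rfl }
      have hi : Function.Injective (i.lTensor M) := by
        apply Function.LeftInverse.injective (g := i'.lTensor M)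
        intro z
        rw [← LinearMap.comp_apply, ← LinearMap.lTensor_comp]
        have : i' ∘ₗ i = LinearMap.id := rfl
        rw [this]; simp
      have : K.subtype.lTensor M = G.subtype.lTensor M ∘ₗ
          (K.comap G.subtype).subtype.lTensor M ∘ₗ i.lTensor M := by
        rw [← LinearMap.lTensor_comp, ← LinearMap.lTensor_comp]
        rfl
      rw [this]
      exact h1.comp (h2.comp hi)
  rw [Module.Flat.iff_lTensor_injective']
  intro I
  exact main ⊥ B (by rintro j hj n; rw [Submodule.mem_bot] at hj; simp [hj]) I

end FlatCrit
end ResVar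


namespace ResVar
section Gen
universe u v w
variable {R : Type v} {B : Type u} {M : Type w} [CommRing R] [CommRing B] [Algebra R B]
  [AddCommGroup M] [Module R M] [Module B M] [IsScalarTower R B M]

lemma torsion_of_tmul_one (P : Ideal R) [P.IsPrime] (Z : Type*) [AddCommGroup Z] [Module R Z]
    (hZ : ∀ j ∈ P, ∀ z : Z, j • z = 0) (z : Z) (hz : z ⊗ₜ[R] (1 : P.ResidueField) = 0) :
    ∃ c ∉ P, c • z = 0 := by
  have htors : Module.IsTorsionBySet R Z (P : Set R) := fun z j => hZ j j.2 z
  let _ : Module (R ⧸ P) Z := htors.module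
  have : IsScalarTower R (R ⧸ P) Z := htors.isScalarTower
  let φ : Z ⊗[R] P.ResidueField →ₗ[R] P.ResidueField ⊗[R ⧸ P] Z :=
    TensorProduct.lift (LinearMap.flip
      (((TensorProduct.mk (R ⧸ P) P.ResidueField Z).restrictScalars₁₂ R R)))
  have h1 : TensorProduct.mk (R ⧸ P) P.ResidueField Z 1 z = 0 := by
    have : φ (z ⊗ₜ[R] (1 : P.ResidueField)) = 0 := by rw [hz, map_zero]
    exact this
  rw [IsLocalizedModule.eq_zero_iff (nonZeroDivisors (R ⧸ P))] at h1
  obtain ⟨⟨c, hc⟩, hcz⟩ := h1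
  obtain ⟨c, rfl⟩ := Ideal.Quotient.mk_surjective c
  refine ⟨c, ?_, hcz⟩
  intro h
  rw [Ideal.Quotient.eq_zero_iff_mem.2 h] at hc
  exact zero_notMem_nonZeroDivisors hc

lemma exists_smul_eq_tmul_one (P : Ideal R) [P.IsPrime] (G : Type*)
    [AddCommGroup G] [Module R G] :
    ∀ x : G ⊗[R] P.ResidueField, ∃ s ∉ P, ∃ g : G, s • x = g ⊗ₜ 1 := by
  intro x
  induction x with
  | zero => exact ⟨1, fun h => Ideal.IsPrime.ne_top ‹_› ((Ideal.eq_top_iff_one _).2 h), 0, by simp⟩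
  | tmul g k =>
    obtain ⟨⟨a, ⟨s, hs⟩⟩, h⟩ := IsLocalization.surj (nonZeroDivisors (R ⧸ P)) k
    obtain ⟨s, rfl⟩ := Ideal.Quotient.mk_surjective s
    obtain ⟨a, rfl⟩ := Ideal.Quotient.mk_surjective a
    refine ⟨s, ?_, a • g, ?_⟩
    · intro h
      rw [Ideal.Quotient.eq_zero_iff_mem.2 h] at hs
      exact zero_notMem_nonZeroDivisors hs
    · have h' : s • k = a • (1 : P.ResidueField) := by
        rw [Algebra.smul_def, Algebra.smul_def, mul_comm, mul_one]
        exact h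
      rw [← TensorProduct.tmul_smul, h', TensorProduct.tmul_smul, TensorProduct.smul_tmul']
  | add x y hx hy =>
    obtain ⟨s, hs, g, h1⟩ := hx
    obtain ⟨t, ht, g', h2⟩ := hy
    refine ⟨s * t, fun h => (Ideal.IsPrime.mem_or_mem ‹_› h).elim hs ht, t • g + s • g', ?_⟩
    rw [smul_add, mul_comm, mul_smul, h1, mul_comm, mul_smul, h2, TensorProduct.add_tmul,
      TensorProduct.smul_tmul', TensorProduct.smul_tmul']

lemma rTensor_residue_inj (P : Ideal R) [P.IsPrime] (G Z : Type*) [AddCommGroup Z] [Module R Z]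
    [AddCommGroup G] [Module R G]
    (hZ : ∀ j ∈ P, ∀ z : Z, j • z = 0) (f : G →ₗ[R] Z) (hf : Function.Injective f) :
    Function.Injective (f.rTensor P.ResidueField) := by
  have hG : ∀ j ∈ P, ∀ z : G, j • z = 0 := fun j hj z => hf (by rw [map_smul, hZ j hj, map_zero])
  rw [injective_iff_map_eq_zero]
  intro x hx
  have key := exists_smul_eq_tmul_one P G
  have unit : ∀ s ∉ P, ∀ x : G ⊗[R] P.ResidueField, s • x = 0 → x = 0 := by
    intro s hs x h
    let μ : P.ResidueField →ₗ[R] P.ResidueField :=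
      LinearMap.mulLeft R ((algebraMap R P.ResidueField s)⁻¹)
    have h2 : μ.lTensor G (s • x) = x := by
      rw [map_smul, ← LinearMap.smul_apply, ← LinearMap.lTensor_smul]
      have : s • μ = LinearMap.id := by
        ext k
        have h0 : algebraMap R P.ResidueField s ≠ 0 := by
          rwa [Ne, Ideal.algebraMap_residueField_eq_zero]
        rw [LinearMap.smul_apply, LinearMap.id_apply, Algebra.smul_def]
        exact mul_inv_cancel_left₀ h0 k
      rw [this]; simp
    rw [← h2, h, map_zero]
  obtain ⟨s, hs, g, hg⟩ := key x
  apply unit s hs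
  have h3 : (f g) ⊗ₜ[R] (1 : P.ResidueField) = 0 := by
    rw [← LinearMap.rTensor_tmul, ← hg, map_smul, hx, smul_zero]
  obtain ⟨c, hc, hcz⟩ := torsion_of_tmul_one P Z hZ _ h3
  rw [← map_smul] at hcz
  have := (injective_iff_map_eq_zero f).1 hf _ hcz
  apply unit c hc
  rw [hg, TensorProduct.smul_tmul', this, TensorProduct.zero_tmul]

lemma finsupp_lTensor_inj {ι Q G F : Type*} [AddCommGroup Q] [Module B Q] [AddCommGroup G]
    [Module B G] [AddCommGroup F] [Module B F] (f : G →ₗ[B] F)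
    (h : Function.Injective (f.lTensor Q)) : Function.Injective (f.lTensor (ι →₀ Q)) := by
  classical
  rw [injective_iff_map_eq_zero]
  intro x hx
  apply (TensorProduct.finsuppLeft B B Q G ι).injective
  rw [map_zero]
  ext i
  apply h
  have : ∀ x, f.lTensor Q (TensorProduct.finsuppLeft B B Q G ι x i) =
      TensorProduct.finsuppLeft B B Q F ι (f.lTensor (ι →₀ Q) x) i := by
    intro x
    induction x with
    | zero => simp
    | add x y hx hy => simp only [map_add, Finsupp.add_apply, hx, hy]
    | tmul q g => simp [TensorProduct.finsuppLeft_apply_tmul_apply]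
  rw [this, hx]; simp

lemma killed_tensor (P : Ideal R) (N : Type*) [AddCommGroup N] [Module B N] [Module R N]
    [IsScalarTower R B N] (hN : ∀ j ∈ P, ∀ n : N, j • n = 0) (j : R) (hj : j ∈ P) (z : M ⊗[B] N) :
    j • z = 0 := by
  induction z with
  | zero => simp
  | add x y hx hy => rw [smul_add, hx, hy, add_zero]
  | tmul m k =>
    rw [TensorProduct.smul_tmul', ← algebraMap_smul B j m, TensorProduct.smul_tmul,
      algebraMap_smul, hN j hj, TensorProduct.tmul_zero]

lemma rc_nat {Q K N : Type*} [AddCommGroup Q] [Module R Q] [AddCommGroup K] [Module B K]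
    [AddCommGroup N] [Module B N] (f : K →ₗ[B] N) (y : (M ⊗[B] K) ⊗[R] Q) :
    f.lTensor (M ⊗[R] Q) (AlgebraTensorModule.rightComm R B B M K Q y) =
      AlgebraTensorModule.rightComm R B B M N Q
        (((f.lTensor M).restrictScalars R).rTensor Q y) := by
  induction y with
  | zero => simp
  | add x y hx hy => simp only [map_add, hx, hy]
  | tmul z q =>
    induction z with
    | zero => simp
    | add x y hx hy => simp only [map_add, TensorProduct.add_tmul, hx, hy]
    | tmul m k => simp

theorem gen_of_free (P : Ideal R) [P.IsPrime] (ι : Type*)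
    (e : (M ⊗[R] P.ResidueField) ≃ₗ[B] (ι →₀ (B ⊗[R] P.ResidueField)))
    (N : Type*) [AddCommGroup N] [Module B N] [Module R N]
    [IsScalarTower R B N] (hN : ∀ j ∈ P, ∀ n : N, j • n = 0) (K : Submodule B N) (x : M ⊗[B] K)
    (hx : K.subtype.lTensor M x = 0) : ∃ c ∉ P, c • x = 0 := by
  have hKN : ∀ j ∈ P, ∀ n : K, j • n = 0 := fun j hj n => Subtype.ext (hN j hj n)
  apply torsion_of_tmul_one P
  · exact killed_tensor P K hKN
  have h1 : Function.Injective (K.subtype.lTensor (B ⊗[R] P.ResidueField)) := by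
    rw [injective_iff_map_eq_zero]
    intro y hy
    obtain ⟨y, rfl⟩ := (AlgebraTensorModule.rightComm R B B B K P.ResidueField).surjective y
    rw [rc_nat, LinearEquiv.map_eq_zero_iff] at hy
    rw [LinearEquiv.map_eq_zero_iff]
    refine (injective_iff_map_eq_zero _).1 (rTensor_residue_inj P (B ⊗[B] K) (B ⊗[B] N)
      (killed_tensor P N hN) ((K.subtype.lTensor B).restrictScalars R) ?_) _ hy
    exact Module.Flat.lTensor_preserves_injective_linearMap (M := B) _ K.injective_subtype
  have h2 : Function.Injective (K.subtype.lTensor (M ⊗[R] P.ResidueField)) := by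
    have := finsupp_lTensor_inj (ι := ι) K.subtype h1
    rw [injective_iff_map_eq_zero] at this ⊢
    intro y hy
    apply (LinearEquiv.rTensor K e).injective
    rw [map_zero]
    apply this
    have : ∀ y, K.subtype.lTensor _ (LinearEquiv.rTensor K e y) =
        LinearEquiv.rTensor N e (K.subtype.lTensor _ y) := by
      intro y
      induction y with
      | zero => simp
      | add x y hx hy => simp only [map_add, hx, hy]
      | tmul q g => simp
    rw [this, hy, map_zero]
  have h3 := rc_nat (Q := P.ResidueField) K.subtype (x ⊗ₜ[R] (1 : P.ResidueField))
  rw [LinearMap.rTensor_tmul, LinearMap.restrictScalars_apply, hx, TensorProduct.zero_tmul,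
    map_zero] at h3
  have h4 := (injective_iff_map_eq_zero _).1 h2 _ h3
  rwa [LinearEquiv.map_eq_zero_iff] at h4
end Gen
end ResVar


namespace ResVar
section Fib
universe u v w
variable {R : Type v} {B : Type u} {A : Type w} [CommRing R] [CommRing B] [CommRing A] [Algebra R B]
  [Algebra R A] [Algebra B A] [IsScalarTower R B A]

lemma exists_free_equiv (n : ℕ) (P : Ideal R) [hP : P.IsPrime] (h : FibersPolynomialOver R B A n) :
    Nonempty ((A ⊗[R] P.ResidueField) ≃ₗ[B]
      ((Fin n →₀ ℕ) →₀ (B ⊗[R] P.ResidueField))) := by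
  obtain ⟨e⟩ := h P hP
  let : Algebra (P.ResidueField ⊗[R] B) (P.ResidueField ⊗[R] A) :=
      (Algebra.TensorProduct.map (AlgHom.id R (P.ResidueField))
        (IsScalarTower.toAlgHom R B A)).toRingHom.toAlgebra
  let e1 : (A ⊗[R] P.ResidueField) ≃+ (P.ResidueField ⊗[R] A) :=
    (TensorProduct.comm R A P.ResidueField).toAddEquiv
  let c : (P.ResidueField ⊗[R] B) ≃+ (B ⊗[R] P.ResidueField) :=
    (TensorProduct.comm R P.ResidueField B).toAddEquiv
  let e3 : (MvPolynomial (Fin n) (P.ResidueField ⊗[R] B)) ≃+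
    ((Fin n →₀ ℕ) →₀ (B ⊗[R] P.ResidueField)) := 
    (AddMonoidAlgebra.coeffAddEquiv).trans (Finsupp.mapRange.addEquiv c)
  let E := (e1.trans e.toRingEquiv.toAddEquiv).trans e3
  refine ⟨{ E with map_smul' := ?_ }⟩
  intro b x
  have h1 : e1 (b • x) = ((1 : P.ResidueField) ⊗ₜ[R] b : P.ResidueField ⊗[R] B) • e1 x := by
    induction x with
    | zero => simp
    | add x y hx hy => rw [smul_add, map_add, map_add, hx, hy, smul_add]
    | tmul a k =>
      change k ⊗ₜ (b • a) = ((1 : P.ResidueField) ⊗ₜ[R] (algebraMap B A b)) * (k ⊗ₜ a)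
      rw [Algebra.TensorProduct.tmul_mul_tmul, one_mul, Algebra.smul_def]
  have h3 : ∀ p, e3 (((1 : P.ResidueField) ⊗ₜ[R] b : P.ResidueField ⊗[R] B) • p) = b • e3 p := by
    intro p
    ext d
    change c ((((1 : P.ResidueField) ⊗ₜ[R] b : P.ResidueField ⊗[R] B) • p).coeff d) =
      b • c (p.coeff d)
    rw [MvPolynomial.coeff_smul]
    generalize p.coeff d = q
    induction q with
    | zero => simp
    | add x y hx hy => rw [smul_add, map_add, map_add, hx, hy, smul_add]
    | tmul a k =>
      rw [smul_eq_mul, Algebra.TensorProduct.tmul_mul_tmul, one_mul]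
      change (b * k) ⊗ₜ a = b • (k ⊗ₜ a)
      rw [TensorProduct.smul_tmul', smul_eq_mul]
  change e3 (e (e1 (b • x))) = b • e3 (e (e1 x))
  rw [h1, map_smul, h3]

theorem flat_of_fibers [IsNoetherianRing R] [Module.Flat R B] [Module.Flat R A] (n : ℕ)
    (h : FibersPolynomialOver R B A n) : Module.Flat B A := by
  refine flat_crit (R := R) ?_
  intro P hP N _ _ _ _ hN K x hx
  obtain ⟨e⟩ := exists_free_equiv n P h
  exact gen_of_free P _ e N hN K x hx

end Fib
end ResVar


namespace ResVar
section Key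
open Polynomial
universe u v
variable {B : Type u} {A : Type v} [CommRing B] [CommRing A] [Algebra B A]

lemma fiber_data (h : IsAffineFibration B A 1) (Q : Ideal B) [hQ : Q.IsPrime] :
    ∃ ψ : A →ₐ[B] Q.ResidueField[X],
      (∀ a, ψ a = 0 → a ∈ LinearMap.range (mulJ B A Q)) ∧
      (∀ f, ∃ s ∉ Q, ∃ a, ψ a = s • f) := by
  obtain ⟨hft, hflat, hfib⟩ := h
  obtain ⟨e⟩ := hfib Q hQ
  let e' : (Q.ResidueField ⊗[B] A) ≃ₐ[Q.ResidueField] Q.ResidueField[X] :=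
    e.trans (MvPolynomial.uniqueAlgEquiv _ (Fin 1))
  let ψ : A →ₐ[B] Q.ResidueField[X] :=
    (e'.restrictScalars B).toAlgHom.comp Algebra.TensorProduct.includeRight
  have hψ : ∀ a, ψ a = e' (1 ⊗ₜ a) := fun a => rfl
  refine ⟨ψ, ?_, ?_⟩
  · intro a ha
    rw [hψ, EmbeddingLike.map_eq_zero_iff] at ha
    have ha' : a ⊗ₜ[B] (1 : Q.ResidueField) = 0 := by
      have := congrArg (TensorProduct.comm B _ _) ha
      simpa using this
    let L := LinearMap.range (mulJ B A Q)
    have h1 : (L.mkQ a) ⊗ₜ[B] (1 : Q.ResidueField) = 0 := by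
      rw [← LinearMap.rTensor_tmul, ha', map_zero]
    obtain ⟨c, hc, hca⟩ := torsion_of_tmul_one Q (A ⧸ L) (by
      intro j hj n
      obtain ⟨f, rfl⟩ := Submodule.Quotient.mk_surjective _ n
      rw [← Submodule.Quotient.mk_smul, Submodule.Quotient.mk_eq_zero]
      exact mem_range_mulJ _ _ _ hj _) _ h1
    rw [← map_smul, Submodule.mkQ_apply, Submodule.Quotient.mk_eq_zero] at hca
    exact torsionfree A Q c hc a hca
  · intro f
    obtain ⟨s, hs, a, ha⟩ := exists_smul_eq_tmul_one Q A
      (TensorProduct.comm B _ _ (e'.symm f))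
    refine ⟨s, hs, a, ?_⟩
    have h1 : s • e'.symm f = 1 ⊗ₜ a := by
      apply (TensorProduct.comm B _ _).injective
      rw [map_smul, ha]; simp
    rw [hψ, ← h1, ← algebraMap_smul Q.ResidueField s, map_smul, algebraMap_smul]
    simp

lemma faithfullyFlat (h : IsAffineFibration B A 1) : Module.FaithfullyFlat B A := by
  have := h.2.1
  refine ⟨?_⟩
  intro m hm htop
  obtain ⟨ψ, -, -⟩ := fiber_data h m
  have h1 : (1 : A) ∈ (m • ⊤ : Submodule B A) := by rw [htop]; trivial
  have h2 : ∀ a ∈ (m • ⊤ : Submodule B A), ψ a = 0 := by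
    intro a ha
    induction ha using Submodule.smul_induction_on' with
    | smul r hr n _ =>
      rw [map_smul, ← algebraMap_smul m.ResidueField r, Ideal.algebraMap_residueField_eq_zero.2 hr,
        zero_smul]
    | add x _ y _ hx hy => rw [map_add, hx, hy, add_zero]
  have := h2 1 h1
  rw [map_one] at this
  exact one_ne_zero this

/-- aeval at a nonconstant polynomial is injective -/
lemma aeval_nonconst {Q : Ideal B} [Q.IsPrime] (g : Q.ResidueField[X]) (hg : 0 < g.natDegree)
    (f : B[X]) (hf : aeval g f = 0) : ∀ i, f.coeff i ∈ Q := by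
  have h1 : (f.map (algebraMap B Q.ResidueField)).comp g = 0 := by
    rw [← hf, Polynomial.comp, Polynomial.eval₂_map, Polynomial.aeval_def]
    rfl
  rw [Polynomial.comp_eq_zero_iff] at h1
  rcases h1 with h1 | ⟨-, h1⟩
  · intro i
    have := congrArg (fun p => Polynomial.coeff p i) h1
    simpa [Polynomial.coeff_map] using this
  · rw [h1] at hg; simp at hg

lemma principal (p : B) {a : A} (ha : a ∈ LinearMap.range (mulJ B A (Ideal.span {p}))) :
    ∃ a', a = p • a' := by
  have h := range_mulJ_le A (Ideal.span {p}) (LinearMap.range (LinearMap.lsmul B A p)) (by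
    intro j hj f
    obtain ⟨c, rfl⟩ := Ideal.mem_span_singleton'.1 hj
    exact ⟨c • f, by rw [LinearMap.lsmul_apply, smul_smul, mul_comm]⟩) ha
  obtain ⟨a', rfl⟩ := h
  exact ⟨a', rfl⟩

/-- The step at a prime `p`. -/
lemma step_dichotomy (h : IsAffineFibration B A 1) (p : B) [hP : (Ideal.span {p}).IsPrime]
    (ψ : A →ₐ[B] (Ideal.span {p}).ResidueField[X])
    (hψ : ∀ a, ψ a = 0 → a ∈ LinearMap.range (mulJ B A (Ideal.span {p})))
    (x : A) (hx : (ψ x).natDegree = 0) : ∃ (b : B) (x' : A), x = algebraMap B A b + p • x' := by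
  have := faithfullyFlat h
  set Q := Ideal.span {p} with hQ
  obtain ⟨k, hk⟩ := Polynomial.natDegree_eq_zero.1 hx
  obtain ⟨⟨b, ⟨s, hs⟩⟩, hb⟩ := IsLocalization.surj (nonZeroDivisors (B ⧸ Q)) k
  obtain ⟨s, rfl⟩ := Ideal.Quotient.mk_surjective s
  obtain ⟨b, rfl⟩ := Ideal.Quotient.mk_surjective b
  have hsQ : s ∉ Q := by
    intro h
    rw [Ideal.Quotient.eq_zero_iff_mem.2 h] at hs
    exact zero_notMem_nonZeroDivisors hs
  have hb' : s • k = algebraMap B Q.ResidueField b := by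
    rw [Algebra.smul_def, mul_comm]
    exact hb
  have h1 : ψ (s • x - algebraMap B A b) = 0 := by
    rw [map_sub, map_smul, ← hk, AlgHom.commutes, Polynomial.smul_C, hb',
      IsScalarTower.algebraMap_apply B Q.ResidueField Q.ResidueField[X], sub_eq_zero]
    rfl
  obtain ⟨a', ha'⟩ := principal p (hψ _ h1)
  have h2 : b ∈ Ideal.span {s, p} := by
    rw [← Ideal.comap_map_eq_self_of_faithfullyFlat (B := A) (Ideal.span {s, p}), Ideal.mem_comap]
    have : algebraMap B A b = x * algebraMap B A s + (-a') * algebraMap B A p := by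
      rw [Algebra.smul_def, Algebra.smul_def] at ha'
      linear_combination -ha'
    rw [this]
    exact Ideal.add_mem _ (Ideal.mul_mem_left _ _ (Ideal.mem_map_of_mem _ (Ideal.subset_span (by simp))))
      (Ideal.mul_mem_left _ _ (Ideal.mem_map_of_mem _ (Ideal.subset_span (by simp))))
  obtain ⟨b1, b2, hb12⟩ := Ideal.mem_span_pair.1 h2
  have h3 : ψ (x - algebraMap B A b1) = 0 := by
    have h4 : algebraMap B Q.ResidueField s ≠ 0 := by
      rwa [Ne, Ideal.algebraMap_residueField_eq_zero]
    have h5 : algebraMap B Q.ResidueField p = 0 := by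
      rw [Ideal.algebraMap_residueField_eq_zero]; exact Ideal.mem_span_singleton_self p
    have h6 : s • (x - algebraMap B A b1) = p • (a' + algebraMap B A b2) := by
      rw [Algebra.smul_def, Algebra.smul_def] at ha' ⊢
      rw [← hb12, map_add, map_mul, map_mul] at ha'
      linear_combination ha'
    have h7 := congrArg ψ h6
    rw [map_smul, map_smul, ← algebraMap_smul Q.ResidueField s, ← algebraMap_smul Q.ResidueField p,
      h5, zero_smul] at h7
    exact (smul_eq_zero.1 h7).resolve_left h4
  obtain ⟨x', hx'⟩ := principal p (hψ _ h3)
  exact ⟨b1, x', by rw [← hx']; ring⟩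

lemma nzd [IsDomain B] (h : IsAffineFibration B A 1) (p : B) (hp : p ≠ 0) (a a' : A)
    (haa : p • a = p • a') : a = a' := by
  have := h.2.1
  have hinj : Function.Injective (LinearMap.lsmul B B p) := fun x y hxy => mul_left_cancel₀ hp hxy
  have := Module.Flat.lTensor_preserves_injective_linearMap (M := A) _ hinj
  apply (TensorProduct.rid B A).symm.injective
  apply this
  simp only [TensorProduct.rid_symm_apply, LinearMap.lTensor_tmul, LinearMap.lsmul_apply,
    TensorProduct.tmul_smul, TensorProduct.smul_tmul', haa]

/-- degrees of constants -/
lemma natDegree_const (p : B) [hP : (Ideal.span {p}).IsPrime]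
    (ψ : A →ₐ[B] (Ideal.span {p}).ResidueField[X]) (b : B) (a : A) :
    (ψ (algebraMap B A b + p • a)).natDegree = 0 := by
  have h5 : algebraMap B (Ideal.span {p}).ResidueField p = 0 := by
    rw [Ideal.algebraMap_residueField_eq_zero]; exact Ideal.mem_span_singleton_self p
  rw [map_add, map_smul, ← algebraMap_smul (Ideal.span {p}).ResidueField p, h5, zero_smul,
    add_zero, AlgHom.commutes,
    IsScalarTower.algebraMap_apply B (Ideal.span {p}).ResidueField (Ideal.span {p}).ResidueField[X]]
  exact Polynomial.natDegree_C _

lemma step_term [IsDomain B] (h : IsAffineFibration B A 1) (p : B) (hp : p ≠ 0)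
    [hP : (Ideal.span {p}).IsPrime]
    (ψ : A →ₐ[B] (Ideal.span {p}).ResidueField[X])
    (hψ : ∀ a, ψ a = 0 → a ∈ LinearMap.range (mulJ B A (Ideal.span {p})))
    (t : A) (ht : 0 < (ψ t).natDegree) (s : ℕ) :
    ∀ x : A, (∃ f : B[X], p ^ s • t = aeval x f) →
      ∃ x', 0 < (ψ x').natDegree ∧ ∀ f : B[X], ∃ g : B[X], aeval x f = aeval x' g := by
  have := faithfullyFlat h
  induction s with
  | zero =>
    rintro x ⟨f, hf⟩
    rcases Nat.eq_zero_or_pos (ψ x).natDegree with hx | hx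
    · exfalso
      obtain ⟨k, hk⟩ := Polynomial.natDegree_eq_zero.1 hx
      rw [pow_zero, one_smul] at hf
      rw [hf, ← Polynomial.aeval_algHom_apply, ← hk] at ht
      have : aeval (C k : (Ideal.span {p}).ResidueField[X]) f = C (aeval k f) := by
        have := Polynomial.aeval_algHom_apply
          ((Algebra.ofId (Ideal.span {p}).ResidueField
            (Ideal.span {p}).ResidueField[X]).restrictScalars B) k f
        exact this
      rw [this, Polynomial.natDegree_C] at ht
      exact lt_irrefl _ ht
    · exact ⟨x, hx, fun f => ⟨f, rfl⟩⟩
  | succ s ih =>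
    rintro x ⟨f, hf⟩
    rcases Nat.eq_zero_or_pos (ψ x).natDegree with hx | hx
    · obtain ⟨b, x1, hx1⟩ := step_dichotomy h p ψ hψ x hx
      have hcomp : ∀ f : B[X], aeval x f = aeval x1 (f.comp (C b + C p * X)) := by
        intro f
        rw [Polynomial.aeval_comp]
        simp [hx1, Algebra.smul_def]
      have hdiv : ∃ g : B[X], f.comp (C b + C p * X) = C (f.eval b) + C p * g := by
        have := Polynomial.sub_dvd_eval_sub (C b + C p * X) (C b) (f.map C)
        rw [Polynomial.eval_map, Polynomial.eval_map] at this
        obtain ⟨g, hg⟩ := this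
        refine ⟨X * g, ?_⟩
        have e1 : Polynomial.eval₂ C (C b) f = C (f.eval b) := by
          rw [Polynomial.eval₂_at_apply]
        rw [e1] at hg
        rw [Polynomial.comp]
        linear_combination hg
      obtain ⟨g, hg⟩ := hdiv
      have hf2 : p ^ (s + 1) • t = algebraMap B A (f.eval b) + p • aeval x1 g := by
        rw [hf, hcomp, hg]
        simp [Algebra.smul_def]
      have hmem : f.eval b ∈ Ideal.span {p} := by
        rw [← Ideal.comap_map_eq_self_of_faithfullyFlat (B := A) (Ideal.span {p}), Ideal.mem_comap]
        have : algebraMap B A (f.eval b) = (p ^ s • t - aeval x1 g) * algebraMap B A p := by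
          rw [pow_succ', mul_smul, Algebra.smul_def p, Algebra.smul_def p] at hf2
          linear_combination -hf2
        rw [this]
        exact Ideal.mul_mem_left _ _ (Ideal.mem_map_of_mem _ (Ideal.mem_span_singleton_self p))
      obtain ⟨b1, hb1⟩ := Ideal.mem_span_singleton'.1 hmem
      have hf3 : p ^ s • t = aeval x1 (C b1 + g) := by
        apply nzd h p hp
        rw [← mul_smul, ← pow_succ', hf2, ← hb1]
        simp [Algebra.smul_def]
        ring
      obtain ⟨x', hx', hall⟩ := ih x1 ⟨_, hf3⟩
      refine ⟨x', hx', fun f => ?_⟩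
      rw [hcomp]
      exact hall _
    · exact ⟨x, hx, fun f => ⟨f, rfl⟩⟩

lemma strip [IsDomain B] (h : IsAffineFibration B A 1) (p : B) (hp : p ≠ 0)
    [hP : (Ideal.span {p}).IsPrime]
    (ψ : A →ₐ[B] (Ideal.span {p}).ResidueField[X])
    (x : A) (hx : 0 < (ψ x).natDegree) (n : ℕ) :
    ∀ a : A, (∃ f : B[X], p ^ n • a = aeval x f) → ∃ f : B[X], a = aeval x f := by
  induction n with
  | zero => simp
  | succ n ih =>
    rintro a ⟨f, hf⟩
    apply ih
    have h5 : algebraMap B (Ideal.span {p}).ResidueField p = 0 := by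
      rw [Ideal.algebraMap_residueField_eq_zero]; exact Ideal.mem_span_singleton_self p
    have h1 : aeval (ψ x) f = 0 := by
      rw [Polynomial.aeval_algHom_apply, ← hf, pow_succ', mul_smul, map_smul,
        ← algebraMap_smul (Ideal.span {p}).ResidueField p, h5, zero_smul]
    have h2 := aeval_nonconst (ψ x) hx f h1
    have h3 : C p ∣ f := by
      rw [Polynomial.C_dvd_iff_dvd_coeff]
      intro i
      exact Ideal.mem_span_singleton.1 (h2 i)
    obtain ⟨g, rfl⟩ := h3
    refine ⟨g, ?_⟩
    apply nzd h p hp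
    rw [← mul_smul, ← pow_succ', hf]
    simp [Algebra.smul_def]

lemma exists_nonconst (h : IsAffineFibration B A 1) (Q : Ideal B) [hQ : Q.IsPrime]
    (ψ : A →ₐ[B] Q.ResidueField[X]) (hs : ∀ f, ∃ s ∉ Q, ∃ a, ψ a = s • f) :
    ∃ t, ∃ s ∉ Q, ψ t = C (algebraMap B _ s) * X := by
  obtain ⟨s, hs, a, ha⟩ := hs X
  refine ⟨a, s, hs, ?_⟩
  rw [ha, ← algebraMap_smul Q.ResidueField s, Polynomial.smul_eq_C_mul]

lemma induct [IsDomain B] [UniqueFactorizationMonoid B] (h : IsAffineFibration B A 1) (b : B) :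
    b ≠ 0 → ∀ x : A, (∀ a : A, ∃ n : ℕ, ∃ f : B[X], b ^ n • a = aeval x f) →
      ∃ x' : A, Function.Surjective (aeval x' : B[X] →ₐ[B] A) := by
  induction b using UniqueFactorizationMonoid.induction_on_prime with
  | h₁ => intro h; exact absurd rfl h
  | h₂ b hb =>
    intro _ x hx
    refine ⟨x, fun a => ?_⟩
    obtain ⟨n, f, hf⟩ := hx a
    obtain ⟨u, hu⟩ := hb.pow n
    refine ⟨C (↑u⁻¹ : B) * f, ?_⟩
    rw [map_mul, ← hf, Polynomial.aeval_C, ← Algebra.smul_def, smul_smul, ← hu, Units.inv_mul,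
      one_smul]
  | h₃ a p ha hp ih =>
    intro hpa x hx
    have hp0 := hp.ne_zero
    have hP : (Ideal.span {p}).IsPrime := (Ideal.span_singleton_prime hp0).2 hp
    obtain ⟨ψ, hψ, hψs⟩ := fiber_data h (Ideal.span {p})
    obtain ⟨t0, s0, hs0, ht0⟩ := exists_nonconst h _ ψ hψs
    obtain ⟨k, u, hu, hpu⟩ : ∃ k u, p * a = p ^ k * u ∧ ¬ p ∣ u := ⟨_,
      (FiniteMultiplicity.of_prime_left hp hpa).exists_eq_pow_mul_and_not_dvd⟩
    obtain ⟨n, f, hf⟩ := hx t0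
    have ht : 0 < (ψ (u ^ n • t0)).natDegree := by
      rw [map_smul, ht0, ← algebraMap_smul (Ideal.span {p}).ResidueField (u ^ n),
        Polynomial.smul_eq_C_mul, ← mul_assoc, ← C_mul, Polynomial.natDegree_C_mul_X]
      · exact one_pos
      · rw [← map_mul, Ne, Ideal.algebraMap_residueField_eq_zero]
        intro hmem
        rcases hP.mem_or_mem hmem with h1 | h1
        · exact hpu (Ideal.mem_span_singleton.1 (hP.mem_of_pow_mem _ h1))
        · exact hs0 h1
    obtain ⟨x', hx', hall⟩ := step_term h p hp0 ψ hψ _ ht (k * n) x ⟨f, by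
      rw [← hf, hu, mul_pow, ← pow_mul, mul_smul]⟩
    refine ih ha x' fun z => ?_
    obtain ⟨n, f, hf⟩ := hx z
    obtain ⟨g, hg⟩ := hall f
    refine ⟨n, strip h p hp0 ψ x' hx' n _ ⟨g, ?_⟩⟩
    rw [← hg, ← hf, mul_pow, mul_smul]

lemma initial [IsDomain B] (h : IsAffineFibration B A 1) :
    ∃ b : B, b ≠ 0 ∧ ∃ x : A, ∀ a : A, ∃ n : ℕ, ∃ f : B[X], b ^ n • a = aeval x f := by
  classical
  obtain ⟨ψ, hψ, hψs⟩ := fiber_data h (⊥ : Ideal B)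
  obtain ⟨x, s, hs, hx⟩ := exists_nonconst h _ ψ hψs
  have hψ0 : ∀ a, ψ a = 0 → a = 0 := by
    intro a ha
    have := range_mulJ_le A (⊥ : Ideal B) (⊥ : Submodule B A) (by
      intro j hj f
      rw [Ideal.mem_bot] at hj
      simp [hj]) (hψ a ha)
    simpa using this
  have hs0 : s ≠ 0 := hs
  have h1 : ∀ g : (⊥ : Ideal B).ResidueField[X], ∃ b : B, b ≠ 0 ∧ ∃ f : B[X],
      b • g = aeval (ψ x) f := by
    intro g
    induction g using Polynomial.induction_on' with
    | add p q hp hq =>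
      obtain ⟨b, hb, f, hf⟩ := hp
      obtain ⟨b', hb', f', hf'⟩ := hq
      refine ⟨b * b', mul_ne_zero hb hb', C b' * f + C b * f', ?_⟩
      rw [map_add, map_mul, map_mul, ← hf, ← hf', aeval_C, aeval_C, ← Algebra.smul_def,
        ← Algebra.smul_def, smul_add, smul_smul, smul_smul, mul_comm b b']
    | monomial n c =>
      obtain ⟨⟨u, ⟨v, hv⟩⟩, huv⟩ := IsLocalization.surj (nonZeroDivisors B) c
      refine ⟨v * s ^ n, mul_ne_zero (nonZeroDivisors.ne_zero hv) (pow_ne_zero _ hs0),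
        C u * X ^ n, ?_⟩
      have huv' : c * algebraMap B _ v = algebraMap B _ u := huv
      rw [map_mul, map_pow, aeval_X, aeval_C, hx, mul_pow, ← C_pow, ← C_mul_X_pow_eq_monomial,
        ← algebraMap_smul (⊥ : Ideal B).ResidueField (v * s ^ n), Polynomial.smul_eq_C_mul,
        IsScalarTower.algebraMap_apply B (⊥ : Ideal B).ResidueField
          (⊥ : Ideal B).ResidueField[X], ← huv']
      simp only [map_mul, map_pow, Polynomial.algebraMap_eq]
      ring
  have h2 : ∀ a : A, ∃ b : B, b ≠ 0 ∧ ∃ f : B[X], b • a = aeval x f := by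
    intro a
    obtain ⟨b, hb, f, hf⟩ := h1 (ψ a)
    refine ⟨b, hb, f, ?_⟩
    rw [← sub_eq_zero]
    apply hψ0
    rw [map_sub, map_smul, hf, Polynomial.aeval_algHom_apply, sub_self]
  obtain ⟨S, hS⟩ := h.1
  have h3 : ∀ T : Finset A, ∃ b : B, b ≠ 0 ∧ ∀ a ∈ T, ∃ f : B[X], b • a = aeval x f := by
    intro T
    induction T using Finset.induction_on with
    | empty => exact ⟨1, one_ne_zero, by simp⟩
    | insert a T _ ih =>
      obtain ⟨b, hb, hT⟩ := ih
      obtain ⟨b', hb', f, hf⟩ := h2 a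
      refine ⟨b * b', mul_ne_zero hb hb', ?_⟩
      intro a' ha'
      rcases Finset.mem_insert.1 ha' with rfl | ha'
      · exact ⟨C b * f, by rw [mul_smul, hf, map_mul, aeval_C, Algebra.smul_def]⟩
      · obtain ⟨f', hf'⟩ := hT a' ha'
        exact ⟨C b' * f', by rw [mul_comm, mul_smul, hf', map_mul, aeval_C, Algebra.smul_def]⟩
  obtain ⟨b, hb, hbS⟩ := h3 S
  refine ⟨b, hb, x, fun a => ?_⟩
  have ha : a ∈ Algebra.adjoin B (S : Set A) := by rw [hS]; trivial
  induction ha using Algebra.adjoin_induction with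
  | mem a ha =>
    obtain ⟨f, hf⟩ := hbS a ha
    exact ⟨1, f, by rw [pow_one, hf]⟩
  | algebraMap r => exact ⟨0, C r, by simp⟩
  | add y z _ _ hy hz =>
    obtain ⟨n, f, hf⟩ := hy
    obtain ⟨m, g, hg⟩ := hz
    refine ⟨n + m, C (b ^ m) * f + C (b ^ n) * g, ?_⟩
    rw [map_add, map_mul, map_mul, ← hf, ← hg, aeval_C, aeval_C]
    simp only [Algebra.smul_def, map_pow]
    ring
  | mul y z _ _ hy hz =>
    obtain ⟨n, f, hf⟩ := hy
    obtain ⟨m, g, hg⟩ := hz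
    refine ⟨n + m, f * g, ?_⟩
    rw [map_mul, ← hf, ← hg]
    simp only [Algebra.smul_def, map_pow]
    ring

theorem key [IsDomain B] [UniqueFactorizationMonoid B] (h : IsAffineFibration B A 1) :
    Nonempty (A ≃ₐ[B] MvPolynomial (Fin 1) B) := by
  obtain ⟨b, hb, x, hx⟩ := initial h
  obtain ⟨x, hx⟩ := induct h b hb x hx
  obtain ⟨ψ, hψ, hψs⟩ := fiber_data h (⊥ : Ideal B)
  obtain ⟨t, s, hs, ht⟩ := exists_nonconst h _ ψ hψs
  have hdeg : 0 < (ψ x).natDegree := by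
    rcases Nat.eq_zero_or_pos (ψ x).natDegree with hx0 | hx0
    · exfalso
      obtain ⟨k, hk⟩ := Polynomial.natDegree_eq_zero.1 hx0
      obtain ⟨f, rfl⟩ := hx t
      rw [← Polynomial.aeval_algHom_apply, ← hk] at ht
      have : aeval (C k : (⊥ : Ideal B).ResidueField[X]) f = C (aeval k f) :=
        Polynomial.aeval_algHom_apply
          ((Algebra.ofId (⊥ : Ideal B).ResidueField
            (⊥ : Ideal B).ResidueField[X]).restrictScalars B) k f
      rw [this] at ht
      have := congrArg Polynomial.natDegree ht
      rw [Polynomial.natDegree_C, Polynomial.natDegree_C_mul_X] at this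
      · exact absurd this (by norm_num)
      · rwa [Ne, Ideal.algebraMap_residueField_eq_zero]
    · exact hx0
  have hinj : Function.Injective (aeval x : B[X] →ₐ[B] A) := by
    rw [injective_iff_map_eq_zero]
    intro f hf
    have := aeval_nonconst (ψ x) hdeg f (by rw [Polynomial.aeval_algHom_apply, hf, map_zero])
    ext i
    simpa using this i
  exact ⟨(AlgEquiv.ofBijective _ ⟨hinj, hx⟩).symm.trans
    (MvPolynomial.uniqueAlgEquiv B (Fin 1)).symm⟩

end Key
end ResVar

namespace ResVar
section Fin
universe u v w
variable {B : Type u} {A : Type v} [CommRing B] [CommRing A] [Algebra B A]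

lemma field_fibre {n : ℕ} (h : IsAffineFibration B A n) (K : Type w) [Field K] [Algebra B K] :
    Nonempty (K ⊗[B] A ≃ₐ[K] MvPolynomial (Fin n) K) := by
  have hQ : (RingHom.ker (algebraMap B K)).IsPrime := RingHom.ker_isPrime _
  set Q := RingHom.ker (algebraMap B K) with hQd
  obtain ⟨e⟩ := h.2.2 Q hQ
  let f : Q.ResidueField →+* K := Ideal.ResidueField.lift Q (algebraMap B K) le_rfl (by
    intro s hs
    exact IsUnit.mk0 _ (fun h0 => hs h0))
  let : Algebra (ResidueFieldAt B Q) K := f.toAlgebra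
  have : IsScalarTower B (ResidueFieldAt B Q) K := IsScalarTower.of_algebraMap_eq (fun b => by
    exact (Ideal.ResidueField.lift_algebraMap Q _ _ _ b).symm)
  exact ⟨((Algebra.TensorProduct.cancelBaseChange B (ResidueFieldAt B Q) K K A).symm.trans
    (Algebra.TensorProduct.congr (AlgEquiv.refl : K ≃ₐ[K] K) e)).trans
    (MvPolynomial.algebraTensorAlgEquiv (ResidueFieldAt B Q) K)⟩

lemma base_change {n : ℕ} (h : IsAffineFibration B A n) (B' : Type w) [CommRing B'] [Algebra B B'] :
    IsAffineFibration B' (B' ⊗[B] A) n := by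
  obtain ⟨h1, h2, h3⟩ := id h
  refine ⟨inferInstance, inferInstance, fun P hP => ?_⟩
  obtain ⟨e⟩ := field_fibre h (ResidueFieldAt B' P)
  exact ⟨(Algebra.TensorProduct.cancelBaseChange B B' (ResidueFieldAt B' P)
    (ResidueFieldAt B' P) A).trans e⟩

end Fin

section Push
universe u v w x
variable {R : Type u} {B : Type v} {A : Type w} (κ : Type x) [CommRing R] [CommRing B] [CommRing A]
  [CommRing κ] [Algebra R B] [Algebra R A] [Algebra B A] [IsScalarTower R B A] [Algebra R κ]

abbrev algP : Algebra (κ ⊗[R] B) (κ ⊗[R] A) :=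
      (Algebra.TensorProduct.map (AlgHom.id R κ)
        (IsScalarTower.toAlgHom R B A)).toRingHom.toAlgebra

abbrev algB : Algebra B (κ ⊗[R] B) :=
  (Algebra.TensorProduct.includeRight : B →ₐ[R] κ ⊗[R] B).toRingHom.toAlgebra

lemma push :
    letI := algP (R := R) (B := B) (A := A) κ
    letI := algB (R := R) (B := B) κ
    Nonempty ((κ ⊗[R] B) ⊗[B] A ≃ₐ[κ ⊗[R] B] κ ⊗[R] A) := by
  let := algP (R := R) (B := B) (A := A) κ
  let := algB (R := R) (B := B) κ
  let := algB (R := R) (B := A) κ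
  let : Algebra B (κ ⊗[R] A) := ((Algebra.TensorProduct.includeRight : A →ₐ[R] κ ⊗[R] A).toRingHom.comp (algebraMap B A)).toAlgebra
  have : IsScalarTower B A (κ ⊗[R] A) := IsScalarTower.of_algebraMap_eq (fun b => rfl)
  have : IsScalarTower B (κ ⊗[R] B) (κ ⊗[R] A) := IsScalarTower.of_algebraMap_eq (fun b => by
    show (1 : κ) ⊗ₜ[R] (algebraMap B A b) = Algebra.TensorProduct.map (AlgHom.id R κ)
        (IsScalarTower.toAlgHom R B A) ((1 : κ) ⊗ₜ[R] b)
    simp)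
  have : IsScalarTower κ (κ ⊗[R] B) (κ ⊗[R] A) := IsScalarTower.of_algebraMap_eq (fun b => by
    show b ⊗ₜ[R] (1 : A) = Algebra.TensorProduct.map (AlgHom.id R κ)
        (IsScalarTower.toAlgHom R B A) (b ⊗ₜ[R] (1 : B))
    simp)
  have : IsScalarTower R B (κ ⊗[R] B) := IsScalarTower.of_algebraMap_eq (fun b => by
    exact ((Algebra.TensorProduct.includeRight : B →ₐ[R] κ ⊗[R] B).commutes b).symm)
  have : IsScalarTower R A (κ ⊗[R] A) := IsScalarTower.of_algebraMap_eq (fun b => by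
    exact ((Algebra.TensorProduct.includeRight : A →ₐ[R] κ ⊗[R] A).commutes b).symm)
  have h1 : Algebra.IsPushout R B κ (κ ⊗[R] B) := by
    have : Algebra.IsPushout R κ B (κ ⊗[R] B) := ⟨TensorProduct.isBaseChange _ _ _⟩
    exact this.symm
  have h2 : Algebra.IsPushout R A κ (κ ⊗[R] A) := by
    have : Algebra.IsPushout R κ A (κ ⊗[R] A) := ⟨TensorProduct.isBaseChange _ _ _⟩
    exact this.symm
  have h3 : Algebra.IsPushout B A (κ ⊗[R] B) (κ ⊗[R] A) := by
    exact (Algebra.IsPushout.comp_iff R B κ (κ ⊗[R] B) (T := A) (T' := κ ⊗[R] A)).1 h2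
  have := h3.symm
  exact ⟨Algebra.IsPushout.equiv B (κ ⊗[R] B) A (κ ⊗[R] A)⟩

end Push
end ResVar

namespace ResVar
section Trdeg
universe u v w
variable {R : Type u} {A : Type v} [CommRing R] [IsDomain R] [CommRing A] [Algebra R A]

lemma fib_trdeg {n : ℕ} (h : IsAffineFibration R A n) :
    IsDomain A ∧ FaithfulSMul R A ∧ Algebra.trdeg R A = n := by
  obtain ⟨e⟩ := field_fibre h (FractionRing R)
  have hflat : Module.Flat R A := h.2.1
  have hinj0 := Algebra.TensorProduct.includeRight_injective (R := R) (A := FractionRing R)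
    (B := A) (IsFractionRing.injective R (FractionRing R))
  let T := MvPolynomial (Fin n) (FractionRing R)
  let φ : A →ₐ[R] T := ((e.restrictScalars R).toAlgHom).comp
    Algebra.TensorProduct.includeRight
  have hφ : Function.Injective φ := e.injective.comp hinj0
  have hdom : IsDomain A := hφ.isDomain φ.toRingHom
  have hRT : Function.Injective (algebraMap R T) := by
    rw [IsScalarTower.algebraMap_eq R (FractionRing R) T]
    rw [RingHom.coe_comp]
    exact (FaithfulSMul.algebraMap_injective (FractionRing R) T).comp
      (IsFractionRing.injective R (FractionRing R))
  have hfaith : FaithfulSMul R A := by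
    rw [faithfulSMul_iff_algebraMap_injective]
    apply Function.Injective.of_comp (f := φ)
    convert hRT
    ext r
    simp
  refine ⟨hdom, hfaith, ?_⟩
  let _ : Algebra A T := φ.toRingHom.toAlgebra
  have : IsScalarTower R A T := IsScalarTower.of_algebraMap_eq (fun r => (φ.commutes r).symm)
  have : FaithfulSMul A T := (faithfulSMul_iff_algebraMap_injective _ _).2 hφ
  have : Algebra.IsAlgebraic R (FractionRing R) := IsFractionRing.isAlgebraic_iff' R R (FractionRing R) |>.1 inferInstance
  let e' : A ⊗[R] (FractionRing R) ≃ₐ[A] T := AlgEquiv.ofRingEquiv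
    (f := (Algebra.TensorProduct.comm R A (FractionRing R)).toRingEquiv.trans e.toRingEquiv)
    (fun a => by
      show e _ = e _
      simp)
  have halg : Algebra.IsAlgebraic A T := e'.isAlgebraic
  have h1 := lift_trdeg_add_eq R A T
  have h2 := lift_trdeg_add_eq R (FractionRing R) T
  rw [trdeg_eq_zero (R := R), MvPolynomial.trdeg_of_isDomain] at h2
  rw [trdeg_eq_zero (R := A)] at h1
  simp only [Cardinal.mk_fin, Cardinal.lift_natCast, Cardinal.lift_zero, zero_add, Cardinal.lift_id, add_zero] at h1 h2
  rw [← h2] at h1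
  simpa using h1

lemma algInd {m : ℕ} (hA : IsAffineFibration R A (m + 1)) (W : Fin m → A)
    (h : IsAffineFibration (Algebra.adjoin R (Set.range W)) A 1) : AlgebraicIndependent R W := by
  obtain ⟨h1, h2, h3⟩ := fib_trdeg hA
  obtain ⟨_, h5, h6⟩ := fib_trdeg h
  have : FaithfulSMul R (Algebra.adjoin R (Set.range W)) := by
    rw [faithfulSMul_iff_algebraMap_injective] at h2 ⊢
    rw [IsScalarTower.algebraMap_eq R (Algebra.adjoin R (Set.range W)) A,
      RingHom.coe_comp] at h2
    exact Function.Injective.of_comp h2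
  have h7 := trdeg_add_eq R (Algebra.adjoin R (Set.range W)) (A := A)
  rw [h3, h6] at h7
  have h8 : Algebra.trdeg R (Algebra.adjoin R (Set.range W)) = m := by
    push_cast at h7
    exact Cardinal.add_one_inj.1 h7
  let W' : Fin m → Algebra.adjoin R (Set.range W) :=
    fun i => ⟨W i, Algebra.subset_adjoin ⟨i, rfl⟩⟩
  have htop : Algebra.adjoin R (Set.range W') = ⊤ := by
    have := Algebra.adjoin_adjoin_coe_preimage (R := R) (s := Set.range W)
    rw [← this]
    congr 1
    ext x
    simp [W', Subtype.ext_iff]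
  have : Algebra.IsAlgebraic (Algebra.adjoin R (Set.range W')) (Algebra.adjoin R (Set.range W)) := by
    rw [htop]
    exact ⟨fun x => isAlgebraic_algebraMap (⟨x, trivial⟩ : (⊤ : Subalgebra R (Algebra.adjoin R (Set.range W))))⟩
  have := (Algebra.IsAlgebraic.isTranscendenceBasis_of_lift_le_trdeg_of_finite R W' (by simp [h8])).1
  exact this.map' (f := (Algebra.adjoin R (Set.range W)).val) Subtype.val_injective

end Trdeg
end ResVar

namespace ResVar
section Final
universe u v w
variable {R : Type u} {A : Type v} {B : Type w} [CommRing R] [CommRing A] [Algebra R A]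
  [CommRing B] [Algebra R B] [Algebra B A] [IsScalarTower R B A]

lemma fibre_of_residual {n : ℕ} (h : FibersPolynomialOver R B A n) (Q : Ideal B) [hQ : Q.IsPrime] :
    Nonempty (ResidueFieldAt B Q ⊗[B] A ≃ₐ[ResidueFieldAt B Q]
      MvPolynomial (Fin n) (ResidueFieldAt B Q)) := by
  have hP : (RingHom.ker (algebraMap R (ResidueFieldAt B Q))).IsPrime := RingHom.ker_isPrime _
  set P := RingHom.ker (algebraMap R (ResidueFieldAt B Q)) with hPd
  let κ := ResidueFieldAt R P
  let K := ResidueFieldAt B Q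
  let f : κ →ₐ[R] K := Ideal.ResidueField.liftₐ P (Algebra.ofId R K) le_rfl (by
    intro s hs
    exact IsUnit.mk0 _ (fun h0 => hs h0))
  let F : κ ⊗[R] B →ₐ[R] K := Algebra.TensorProduct.productMap f (IsScalarTower.toAlgHom R B K)
  let _ := algP (R := R) (B := B) (A := A) κ
  let _ := algB (R := R) (B := B) κ
  obtain ⟨e⟩ := h P hP
  obtain ⟨e2⟩ := push (R := R) (B := B) (A := A) κ
  let _ : Algebra (κ ⊗[R] B) K := F.toRingHom.toAlgebra
  have : IsScalarTower B (κ ⊗[R] B) K := IsScalarTower.of_algebraMap_eq (fun b => by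
    show _ = F ((1 : κ) ⊗ₜ[R] b)
    simp [F])
  exact ⟨((Algebra.TensorProduct.cancelBaseChange B (κ ⊗[R] B) K K A).symm.trans
    (Algebra.TensorProduct.congr (AlgEquiv.refl : K ≃ₐ[K] K) (e2.trans e))).trans
    (MvPolynomial.algebraTensorAlgEquiv (κ ⊗[R] B) K)⟩

lemma residual_of_fib {m : ℕ} (eB : Nonempty (B ≃ₐ[R] MvPolynomial (Fin m) R))
    (h : IsAffineFibration B A 1) : FibersPolynomialOver R B A 1 := by
  intro P hP
  let κ := ResidueFieldAt R P
  let _ := algP (R := R) (B := B) (A := A) κ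
  let _ := algB (R := R) (B := B) κ
  obtain ⟨e2⟩ := push (R := R) (B := B) (A := A) κ
  obtain ⟨eB⟩ := eB
  let e3 : κ ⊗[R] B ≃ₐ[κ] MvPolynomial (Fin m) κ :=
    (Algebra.TensorProduct.congr (AlgEquiv.refl : κ ≃ₐ[κ] κ) eB).trans
      (MvPolynomial.algebraTensorAlgEquiv R κ)
  have hd : IsDomain (κ ⊗[R] B) := e3.toMulEquiv.isDomain _
  have hu : UniqueFactorizationMonoid (κ ⊗[R] B) :=
    e3.symm.toMulEquiv.uniqueFactorizationMonoid inferInstance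
  obtain ⟨e⟩ := key (base_change h (κ ⊗[R] B))
  exact ⟨e2.symm.trans e⟩

end Final
end ResVar

/-- Let `R` be a Noetherian domain and `A` an `𝔸^{m+1}`-fibration over `R`.  An `m`-tuple
`W` of elements of `A` is an `m`-tuple residual variable of `A` over `R` if and only if
`A` is an `𝔸¹`-fibration over `R[W]`. -/
theorem residualVariable_iff_isAffineFibration_one
    (R A : Type*) [CommRing R] [IsDomain R] [IsNoetherianRing R]
    [CommRing A] [Algebra R A]
    (m : ℕ) (hA : IsAffineFibration R A (m + 1)) (W : Fin m → A) :
    IsResidualVariable R A (m + 1) m W ↔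
      IsAffineFibration ↥(Algebra.adjoin R (Set.range W)) A 1 := by
  unfold IsResidualVariable
  rw [Nat.add_sub_cancel_left]
  constructor
  · rintro ⟨hW, hf⟩
    have hft : Algebra.FiniteType R A := hA.1
    have hfl : Module.Flat R A := hA.2.1
    have : Module.Flat R (Algebra.adjoin R (Set.range W)) :=
      Module.Flat.of_linearEquiv hW.aevalEquiv.symm.toLinearEquiv
    refine ⟨Algebra.FiniteType.of_restrictScalars_finiteType R _ A,
      ResVar.flat_of_fibers 1 hf, fun Q hQ => ResVar.fibre_of_residual hf Q⟩
  · intro h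
    have hW := ResVar.algInd hA W h
    exact ⟨hW, ResVar.residual_of_fib ⟨hW.aevalEquiv.symm⟩ h⟩
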